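/- Assume L/2 ≥ M ≥ r, L ≥ M+1, and π(x|Y) ≥ γ > 0 for all x, Y. Let ε > 0, C > 0 and f : 𝒳^{L+1} → [−C, C]. Let q(e) denote the single-token marginal of the stationary window distribution μ̄ at its last coordinate (so q(e) ≥ γ for all e ∈ 𝒳), and set ȳ(k) = (L−M)^{−1} Σ_{l=M+1}^{L} 1{x_l = e_k}. Define A = E_{X∼p}[ (L−M)^{−1} Σ_{l=M+1}^{L} Σ_{k=1}^{d} ( 1{x_{L+1}=x_l=e_k}/(ȳ(k)+ε) − ȳ(k)·1{x_{L+1}=e_k}/(ȳ(k)+ε) ) · f(X) ] and B = E_{X∼p}[ (L−M)^{−1} Σ_{l=M+1}^{L} ( Σ_{k=1}^{d} 1{x_{L+1}=x_l=e_k}/q(e_k) − 1 ) · f(X) ]. Then |A − B| ≤ 4C·( (1−λ)^{−1/2}·(D₀+1)^{1/4} + 2√M ) / ( L^{1/2}·γ ) + C·γ^{−1}·ε. -/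

import Mathlib

open Finset

/-- Probability of the full sequence `x` (tokens indexed `0,…,T-1`, i.e. `x_1,…,x_T`)
under the `n`-gram Markov chain with parent offsets `r`, transition kernel `pk`,
and initial distribution `init` on the first `R` tokens. -/
noncomputable def ngramProb (d n R T : ℕ) (r : Fin n → ℕ)
    (pk : (Fin n → Fin d) → Fin d → ℝ) (init : (Fin R → Fin d) → ℝ)
    (hRT : R ≤ T) (x : Fin T → Fin d) : ℝ :=
  init (fun i => x ⟨i.1, lt_of_lt_of_le i.2 hRT⟩) *
    ∏ l ∈ (Finset.Ico R T).attach,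
      pk (fun k => x ⟨l.1 - r k, lt_of_le_of_lt (Nat.sub_le _ _) (Finset.mem_Ico.mp l.2).2⟩)
        (x ⟨l.1, (Finset.mem_Ico.mp l.2).2⟩)

/-- The window transition matrix `P_π` on `𝒳^R` of the `n`-gram chain:
`P(Z', Z) = π(z'_R | Z parents) · 1{Z' is the shift of Z}`. -/
noncomputable def windowMatrix (d n R : ℕ) (hR : 0 < R) (r : Fin n → ℕ)
    (hrpos : ∀ k, 0 < r k) (pk : (Fin n → Fin d) → Fin d → ℝ) :
    Matrix (Fin R → Fin d) (Fin R → Fin d) ℝ :=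
  Matrix.of fun Z' Z =>
    if ∀ j : Fin (R - 1),
        Z' ⟨j.1, lt_of_lt_of_le j.2 (Nat.sub_le R 1)⟩ = Z ⟨j.1 + 1, by have := j.2; omega⟩ then
      pk (fun k => Z ⟨R - r k, Nat.sub_lt hR (hrpos k)⟩) (Z' ⟨R - 1, Nat.sub_lt hR Nat.one_pos⟩)
    else 0

/-- The matrix `K - √μ (√μ)ᵀ` where `K = diag(√μ)⁻¹ P_π diag(√μ)`. -/
noncomputable def specA (d n R : ℕ) (hR : 0 < R) (r : Fin n → ℕ) (hrpos : ∀ k, 0 < r k)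
    (pk : (Fin n → Fin d) → Fin d → ℝ) (μ : (Fin R → Fin d) → ℝ) :
    Matrix (Fin R → Fin d) (Fin R → Fin d) ℝ :=
  (Matrix.diagonal fun Z => (Real.sqrt (μ Z))⁻¹) * windowMatrix d n R hR r hrpos pk *
      (Matrix.diagonal fun Z => Real.sqrt (μ Z)) -
    Matrix.vecMulVec (fun Z => Real.sqrt (μ Z)) (fun Z => Real.sqrt (μ Z))

/-- Total variation distance: half the ℓ₁ distance. -/
noncomputable def tvDist {α : Type*} [Fintype α] (p q : α → ℝ) : ℝ :=
  (∑ w, |p w - q w|) / 2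

/-- χ²-divergence `D_{χ²}(p ‖ q) = Σ_ω (p ω - q ω)² / q ω`. -/
noncomputable def chiSq {α : Type*} [Fintype α] (p q : α → ℝ) : ℝ :=
  ∑ w, (p w - q w) ^ 2 / q w

theorem icoLtSucc {M L : ℕ} (l : {m // m ∈ Finset.Ico M L}) : l.1 < L + 1 :=
  Nat.lt_succ_of_lt (Finset.mem_Ico.mp l.2).2

/-- The single-token marginal at the last coordinate of a distribution on `𝒳^{M+1}`. -/
noncomputable def tokenMarg (d M : ℕ) (μb : (Fin (M + 1) → Fin d) → ℝ) (e : Fin d) : ℝ :=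
  ∑ y : Fin (M + 1) → Fin d, if y ⟨M, Nat.lt_succ_self M⟩ = e then μb y else 0


/-- Extend a finite sequence to a total one. -/
def extd {d : ℕ} (hd : 0 < d) {T : ℕ} (x : Fin T → Fin d) (i : ℕ) : Fin d :=
  if h : i < T then x ⟨i, h⟩ else ⟨0, hd⟩

/-- Weight of a total sequence up to time `T`. -/
noncomputable def wt {d n : ℕ} (R T : ℕ) (r : Fin n → ℕ)
    (pk : (Fin n → Fin d) → Fin d → ℝ) (init : (Fin R → Fin d) → ℝ) (x : ℕ → Fin d) : ℝ :=
  init (fun i => x i.1) * ∏ l ∈ Finset.Ico R T, pk (fun k => x (l - r k)) (x l)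

/-- Expectation. -/
noncomputable def EE {d n : ℕ} (hd : 0 < d) (R : ℕ) (r : Fin n → ℕ)
    (pk : (Fin n → Fin d) → Fin d → ℝ) (init : (Fin R → Fin d) → ℝ) (T : ℕ)
    (F : (ℕ → Fin d) → ℝ) : ℝ :=
  ∑ x : Fin T → Fin d, wt R T r pk init (extd hd x) * F (extd hd x)

/-- The window marginal of a weighted chain. -/
noncomputable def WW {d n : ℕ} (hd : 0 < d) (R : ℕ) (r : Fin n → ℕ)
    (pk : (Fin n → Fin d) → Fin d → ℝ) (init : (Fin R → Fin d) → ℝ) (T : ℕ)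
    (F : (ℕ → Fin d) → ℝ) (Z : Fin R → Fin d) : ℝ :=
  EE hd R r pk init T
    (fun x => F x * if (fun i : Fin R => x (T - R + i.1)) = Z then 1 else 0)

lemma extd_lt {d : ℕ} (hd : 0 < d) {T : ℕ} (x : Fin T → Fin d) (i : ℕ) (h : i < T) :
    extd hd x i = x ⟨i, h⟩ := by simp [extd, h]

lemma ngramProb_eq_wt {d n R T : ℕ} (hd : 0 < d) (r : Fin n → ℕ)
    (pk : (Fin n → Fin d) → Fin d → ℝ) (init : (Fin R → Fin d) → ℝ)
    (hRT : R ≤ T) (x : Fin T → Fin d) :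
    ngramProb d n R T r pk init hRT x = wt R T r pk init (extd hd x) := by
  unfold ngramProb wt
  congr 1
  · congr 1; funext i; rw [extd_lt]
  · rw [← Finset.prod_attach (Finset.Ico R T)]
    refine Finset.prod_congr rfl fun l _ => ?_
    have hl := (Finset.mem_Ico.mp l.2).2
    rw [extd_lt hd x l.1 hl]
    congr 1; funext k
    rw [extd_lt hd x _ (by omega)]

lemma extd_snoc {d : ℕ} (hd : 0 < d) {T : ℕ} (x : Fin T → Fin d) (e : Fin d) :
    extd hd (Fin.snoc x e : Fin (T + 1) → Fin d) = Function.update (extd hd x) T e := by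
  funext i
  rcases lt_trichotomy i T with h | h | h
  · rw [extd_lt hd _ i (by omega), Function.update_of_ne (by omega), extd_lt hd x i h]
    simp [Fin.snoc, h]
  · subst h
    rw [extd_lt hd _ i (by omega)]
    simp [Fin.snoc]
  · rw [Function.update_of_ne (by omega)]
    simp [extd, show ¬ i < T + 1 by omega, show ¬ i < T by omega]

lemma wt_succ {d n : ℕ} (R T : ℕ) (r : Fin n → ℕ) (hr : ∀ k, 0 < r k)
    (pk : (Fin n → Fin d) → Fin d → ℝ) (init : (Fin R → Fin d) → ℝ) (x : ℕ → Fin d)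
    (e : Fin d) (hRT : R ≤ T) (hR : 0 < R) :
    wt R (T + 1) r pk init (Function.update x T e)
      = wt R T r pk init x * pk (fun k => x (T - r k)) e := by
  unfold wt
  rw [Finset.prod_Ico_succ_top hRT, ← mul_assoc]
  congr 1
  · congr 1
    · congr 1; funext i; rw [Function.update_of_ne (by omega)]
    · refine Finset.prod_congr rfl fun l hl => ?_
      have hl := Finset.mem_Ico.mp hl
      rw [Function.update_of_ne (by omega)]
      congr 1; funext k; rw [Function.update_of_ne (by omega)]
  · simp only [Function.update_self]
    congr 1; funext k; have := hr k; rw [Function.update_of_ne (by omega)]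

lemma EE_succ {d n : ℕ} (hd : 0 < d) (R T : ℕ) (r : Fin n → ℕ) (hr : ∀ k, 0 < r k)
    (pk : (Fin n → Fin d) → Fin d → ℝ) (init : (Fin R → Fin d) → ℝ)
    (hRT : R ≤ T) (hR : 0 < R) (F : (ℕ → Fin d) → ℝ) :
    EE hd R r pk init (T + 1) F = EE hd R r pk init T
      (fun x => ∑ e, pk (fun k => x (T - r k)) e * F (Function.update x T e)) := by
  unfold EE
  rw [← (Fin.snocEquiv (fun _ : Fin (T + 1) => Fin d)).sum_comp, Fintype.sum_prod_type,
    Finset.sum_comm]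
  refine Finset.sum_congr rfl fun x _ => ?_
  rw [Finset.mul_sum]
  refine Finset.sum_congr rfl fun e _ => ?_
  have : (Fin.snocEquiv (fun _ : Fin (T + 1) => Fin d)) (e, x) = Fin.snoc x e := rfl
  rw [this, extd_snoc, wt_succ R T r hr pk init _ e hRT hR]
  ring

lemma EE_succ_indep {d n : ℕ} (hd : 0 < d) (R T : ℕ) (r : Fin n → ℕ) (hr : ∀ k, 0 < r k)
    (pk : (Fin n → Fin d) → Fin d → ℝ) (hpk1 : ∀ Y, ∑ e, pk Y e = 1)
    (init : (Fin R → Fin d) → ℝ)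
    (hRT : R ≤ T) (hR : 0 < R) (F : (ℕ → Fin d) → ℝ)
    (hF : ∀ x e, F (Function.update x T e) = F x) :
    EE hd R r pk init (T + 1) F = EE hd R r pk init T F := by
  rw [EE_succ hd R T r hr pk init hRT hR]
  congr 1; funext x
  simp only [hF, ← Finset.sum_mul, hpk1, one_mul]

lemma EE_le_indep {d n : ℕ} (hd : 0 < d) (R T T' : ℕ) (r : Fin n → ℕ) (hr : ∀ k, 0 < r k)
    (pk : (Fin n → Fin d) → Fin d → ℝ) (hpk1 : ∀ Y, ∑ e, pk Y e = 1)
    (init : (Fin R → Fin d) → ℝ)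
    (hRT : R ≤ T) (hR : 0 < R) (hT : T ≤ T') (F : (ℕ → Fin d) → ℝ)
    (hF : ∀ x e t, T ≤ t → F (Function.update x t e) = F x) :
    EE hd R r pk init T' F = EE hd R r pk init T F := by
  induction T', hT using Nat.le_induction with
  | base => rfl
  | succ t ht ih =>
    rw [EE_succ_indep hd R t r hr pk hpk1 init (by omega) hR F (fun x e => hF x e t ht), ih]

lemma win_step {d n : ℕ} (R T : ℕ) (r : Fin n → ℕ) (hr : ∀ k, 0 < r k)
    (hrR : ∀ k, r k ≤ R)
    (pk : (Fin n → Fin d) → Fin d → ℝ) (hRT : R ≤ T) (hR : 0 < R) (x : ℕ → Fin d)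
    (Z' : Fin R → Fin d) :
    (∑ e, pk (fun k => x (T - r k)) e *
      if (fun i : Fin R => (Function.update x T e) (T + 1 - R + i.1)) = Z' then (1:ℝ) else 0)
    = windowMatrix d n R hR r hr pk Z' (fun i : Fin R => x (T - R + i.1)) := by
  have key : ∀ e, ((fun i : Fin R => (Function.update x T e) (T + 1 - R + i.1)) = Z') ↔
      ((∀ j : Fin (R - 1), Z' ⟨j.1, lt_of_lt_of_le j.2 (Nat.sub_le R 1)⟩ = x (T - R + (j.1 + 1)))
        ∧ e = Z' ⟨R - 1, Nat.sub_lt hR Nat.one_pos⟩) := by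
    intro e
    constructor
    · intro h
      subst h
      refine ⟨fun j => ?_, ?_⟩
      · have := j.2
        simp only
        rw [Function.update_of_ne (by omega)]
        congr 1; omega
      · simp only
        rw [show T + 1 - R + (R - 1) = T by omega, Function.update_self]
    · rintro ⟨h1, h2⟩
      funext i
      by_cases hi : i.1 = R - 1
      · have : i = ⟨R - 1, Nat.sub_lt hR Nat.one_pos⟩ := Fin.ext hi
        subst this
        simp only
        rw [show T + 1 - R + (R - 1) = T by omega, Function.update_self, h2]
      · have hi2 := i.2
        have := h1 ⟨i.1, by omega⟩
        simp only at this
        rw [Function.update_of_ne (by omega)]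
        rw [this]; congr 1; omega
  simp only [key]
  unfold windowMatrix
  simp only [Matrix.of_apply]
  by_cases h : (∀ j : Fin (R - 1),
      Z' ⟨j.1, lt_of_lt_of_le j.2 (Nat.sub_le R 1)⟩ = x (T - R + (j.1 + 1)))
  · rw [if_pos h]
    simp only [h, implies_true, true_and, mul_ite, mul_one, mul_zero, Finset.sum_ite_eq',
      Finset.mem_univ, if_true]
    congr 1; funext k
    have := hrR k
    congr 1; omega
  · rw [if_neg h]
    simp [h]

lemma WW_succ {d n : ℕ} (hd : 0 < d) (R T : ℕ) (r : Fin n → ℕ) (hr : ∀ k, 0 < r k)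
    (hrR : ∀ k, r k ≤ R)
    (pk : (Fin n → Fin d) → Fin d → ℝ) (init : (Fin R → Fin d) → ℝ)
    (hRT : R ≤ T) (hR : 0 < R) (F : (ℕ → Fin d) → ℝ)
    (hF : ∀ x e, F (Function.update x T e) = F x) (Z' : Fin R → Fin d) :
    WW hd R r pk init (T + 1) F Z'
      = ∑ Z, windowMatrix d n R hR r hr pk Z' Z * WW hd R r pk init T F Z := by
  unfold WW
  rw [EE_succ hd R T r hr pk init hRT hR]
  simp only [hF]
  have : ∀ x : ℕ → Fin d, (∑ e, pk (fun k => x (T - r k)) e * (F x *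
      if (fun i : Fin R => (Function.update x T e) (T + 1 - R + i.1)) = Z' then (1:ℝ) else 0))
      = ∑ Z, windowMatrix d n R hR r hr pk Z' Z *
        (F x * if (fun i : Fin R => x (T - R + i.1)) = Z then (1:ℝ) else 0) := by
    intro x
    rw [show (∑ Z, windowMatrix d n R hR r hr pk Z' Z *
        (F x * if (fun i : Fin R => x (T - R + i.1)) = Z then (1:ℝ) else 0))
        = F x * windowMatrix d n R hR r hr pk Z' (fun i : Fin R => x (T - R + i.1)) by
          simp [mul_comm]]
    rw [← win_step R T r hr hrR pk hRT hR x Z', Finset.mul_sum]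
    exact Finset.sum_congr rfl fun e _ => by ring
  simp only [this]
  unfold EE
  simp only [Finset.mul_sum]
  rw [Finset.sum_comm]
  refine Finset.sum_congr rfl fun x _ => Finset.sum_congr rfl fun Z _ => by ring

lemma WW_sum {d n : ℕ} (hd : 0 < d) (R T : ℕ) (r : Fin n → ℕ)
    (pk : (Fin n → Fin d) → Fin d → ℝ) (init : (Fin R → Fin d) → ℝ)
    (F : (ℕ → Fin d) → ℝ) (G : (Fin R → Fin d) → ℝ) :
    ∑ Z, G Z * WW hd R r pk init T F Z
      = EE hd R r pk init T (fun x => F x * G (fun i : Fin R => x (T - R + i.1))) := by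
  unfold WW EE
  simp only [Finset.mul_sum]
  rw [Finset.sum_comm]
  refine Finset.sum_congr rfl fun x _ => ?_
  simp [mul_comm, mul_left_comm, mul_assoc]

lemma WW_last {d n : ℕ} (hd : 0 < d) (R l : ℕ) (r : Fin n → ℕ)
    (pk : (Fin n → Fin d) → Fin d → ℝ) (init : (Fin R → Fin d) → ℝ)
    (hR : 0 < R) (hl : R ≤ l) (g : Fin d → ℝ) (Z : Fin R → Fin d) :
    WW hd R r pk init (l + 1) (fun x => g (x l)) Z
      = g (Z ⟨R - 1, Nat.sub_lt hR Nat.one_pos⟩) * WW hd R r pk init (l + 1) (fun _ => 1) Z := by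
  unfold WW EE
  rw [Finset.mul_sum]
  refine Finset.sum_congr rfl fun x _ => ?_
  beta_reduce
  by_cases h : (fun i : Fin R => extd hd x (l + 1 - R + i.1)) = Z
  · rw [if_pos h, ← h]
    simp only
    rw [show l + 1 - R + (R - 1) = l by omega]
    ring
  · rw [if_neg h]; ring

lemma WW_init {d n : ℕ} (hd : 0 < d) (R : ℕ) (r : Fin n → ℕ)
    (pk : (Fin n → Fin d) → Fin d → ℝ) (init : (Fin R → Fin d) → ℝ) (Z : Fin R → Fin d) :
    WW hd R r pk init R (fun _ => 1) Z = init Z := by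
  unfold WW EE wt
  have : ∀ x : Fin R → Fin d, (fun i : Fin R => extd hd x i.1) = x := by
    intro x; funext i; rw [extd_lt hd x i.1 i.2]
  simp [this]

lemma contr {d n R : ℕ} (hR : 0 < R) (r : Fin n → ℕ) (hrpos : ∀ i, 0 < r i)
    (pk : (Fin n → Fin d) → Fin d → ℝ)
    (μ : (Fin R → Fin d) → ℝ) (hμpos : ∀ Z, 0 < μ Z)
    (lam : ℝ) (hlam0 : 0 ≤ lam)
    (hop : ∀ v : (Fin R → Fin d) → ℝ,
      Real.sqrt (∑ Z', Matrix.mulVec (specA d n R hR r hrpos pk μ) v Z' ^ 2)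
        ≤ lam * Real.sqrt (∑ Z, v Z ^ 2))
    (w : (Fin R → Fin d) → ℝ) (hw : ∑ Z, w Z = 0) :
    ∑ Z', (∑ Z, windowMatrix d n R hR r hrpos pk Z' Z * w Z) ^ 2 / μ Z'
      ≤ lam ^ 2 * ∑ Z, w Z ^ 2 / μ Z := by
  have h := hop (fun Z => w Z / Real.sqrt (μ Z))
  have hs : ∀ Z, 0 < Real.sqrt (μ Z) := fun Z => Real.sqrt_pos.2 (hμpos Z)
  have hs2 : ∀ Z, Real.sqrt (μ Z) ^ 2 = μ Z := fun Z => Real.sq_sqrt (hμpos Z).le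
  have e1 : ∀ Z', Matrix.mulVec (specA d n R hR r hrpos pk μ)
      (fun Z => w Z / Real.sqrt (μ Z)) Z'
      = (∑ Z, windowMatrix d n R hR r hrpos pk Z' Z * w Z) / Real.sqrt (μ Z') := by
    intro Z'
    simp only [Matrix.mulVec, dotProduct, specA, Matrix.sub_apply, Matrix.mul_diagonal,
      Matrix.diagonal_mul, Matrix.vecMulVec_apply]
    have : ∀ Z, ((Real.sqrt (μ Z'))⁻¹ * windowMatrix d n R hR r hrpos pk Z' Z * Real.sqrt (μ Z)
        - Real.sqrt (μ Z') * Real.sqrt (μ Z)) * (w Z / Real.sqrt (μ Z))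
        = (windowMatrix d n R hR r hrpos pk Z' Z * w Z) / Real.sqrt (μ Z')
          - Real.sqrt (μ Z') * w Z := by
      intro Z
      have := (hs Z).ne'
      have := (hs Z').ne'
      field_simp
    simp only [this, Finset.sum_sub_distrib, ← Finset.mul_sum, hw, mul_zero, sub_zero,
      Finset.sum_div]
  simp only [e1, div_pow, hs2] at h
  have n1 : 0 ≤ ∑ Z', (∑ Z, windowMatrix d n R hR r hrpos pk Z' Z * w Z) ^ 2 / μ Z' :=
    Finset.sum_nonneg fun Z _ => div_nonneg (sq_nonneg _) (hμpos Z).le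
  have n2 : 0 ≤ ∑ Z, w Z ^ 2 / μ Z :=
    Finset.sum_nonneg fun Z _ => div_nonneg (sq_nonneg _) (hμpos Z).le
  have h2 := pow_le_pow_left₀ (Real.sqrt_nonneg _) h 2
  rwa [mul_pow, Real.sq_sqrt n1, Real.sq_sqrt n2] at h2

lemma iter_contr {d n R : ℕ} (hR : 0 < R) (r : Fin n → ℕ) (hrpos : ∀ i, 0 < r i)
    (pk : (Fin n → Fin d) → Fin d → ℝ)
    (μ : (Fin R → Fin d) → ℝ) (hμpos : ∀ Z, 0 < μ Z) (hμ1 : ∑ Z, μ Z = 1)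
    (hstat : ∀ Z', μ Z' = ∑ Z, windowMatrix d n R hR r hrpos pk Z' Z * μ Z)
    (lam : ℝ) (hlam0 : 0 ≤ lam)
    (hop : ∀ v : (Fin R → Fin d) → ℝ,
      Real.sqrt (∑ Z', Matrix.mulVec (specA d n R hR r hrpos pk μ) v Z' ^ 2)
        ≤ lam * Real.sqrt (∑ Z, v Z ^ 2))
    (w : ℕ → (Fin R → Fin d) → ℝ) (s : ℝ) (hw : ∀ t, ∑ Z, w t Z = s)
    (hstep : ∀ t Z', w (t + 1) Z' = ∑ Z, windowMatrix d n R hR r hrpos pk Z' Z * w t Z) (t : ℕ) :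
    ∑ Z, (w t Z - s * μ Z) ^ 2 / μ Z ≤ (lam ^ t) ^ 2 * ∑ Z, (w 0 Z - s * μ Z) ^ 2 / μ Z := by
  induction t with
  | zero => simp
  | succ t ih =>
    have h := contr hR r hrpos pk μ hμpos lam hlam0 hop (fun Z => w t Z - s * μ Z)
      (by rw [Finset.sum_sub_distrib, ← Finset.mul_sum, hμ1, hw]; ring)
    have e : ∀ Z', ∑ Z, windowMatrix d n R hR r hrpos pk Z' Z * (w t Z - s * μ Z)
        = w (t + 1) Z' - s * μ Z' := by
      intro Z'
      rw [hstep, hstat Z', Finset.mul_sum, ← Finset.sum_sub_distrib]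
      exact Finset.sum_congr rfl fun Z _ => by ring
    simp only [e] at h
    calc _ ≤ _ := h
      _ ≤ lam ^ 2 * ((lam ^ t) ^ 2 * ∑ Z, (w 0 Z - s * μ Z) ^ 2 / μ Z) := by gcongr
      _ = _ := by ring

lemma nrm_center {R d : ℕ} (μ : (Fin R → Fin d) → ℝ) (hμpos : ∀ Z, 0 < μ Z) (hμ1 : ∑ Z, μ Z = 1)
    (w : (Fin R → Fin d) → ℝ) (s : ℝ) (hw : ∑ Z, w Z = s) :
    ∑ Z, (w Z - s * μ Z) ^ 2 / μ Z = (∑ Z, w Z ^ 2 / μ Z) - s ^ 2 := by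
  have : ∀ Z, (w Z - s * μ Z) ^ 2 / μ Z = w Z ^ 2 / μ Z - 2 * s * w Z + s ^ 2 * μ Z := by
    intro Z
    have := (hμpos Z).ne'
    field_simp
    ring
  simp only [this, Finset.sum_add_distrib, Finset.sum_sub_distrib, ← Finset.mul_sum, hw, hμ1]
  ring

lemma EE_sum {d n : ℕ} (hd : 0 < d) (R : ℕ) (r : Fin n → ℕ)
    (pk : (Fin n → Fin d) → Fin d → ℝ) (init : (Fin R → Fin d) → ℝ) (T : ℕ)
    {ι : Type*} (s : Finset ι) (F : ι → (ℕ → Fin d) → ℝ) :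
    EE hd R r pk init T (fun x => ∑ i ∈ s, F i x) = ∑ i ∈ s, EE hd R r pk init T (F i) := by
  unfold EE
  rw [Finset.sum_comm]
  exact Finset.sum_congr rfl fun x _ => by rw [Finset.mul_sum]

lemma EE_smul {d n : ℕ} (hd : 0 < d) (R : ℕ) (r : Fin n → ℕ)
    (pk : (Fin n → Fin d) → Fin d → ℝ) (init : (Fin R → Fin d) → ℝ) (T : ℕ)
    (c : ℝ) (F : (ℕ → Fin d) → ℝ) :
    EE hd R r pk init T (fun x => c * F x) = c * EE hd R r pk init T F := by
  unfold EE
  rw [Finset.mul_sum]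
  exact Finset.sum_congr rfl fun x _ => by ring

lemma wt_nonneg {d n : ℕ} (R T : ℕ) (r : Fin n → ℕ)
    (pk : (Fin n → Fin d) → Fin d → ℝ) (hpk0 : ∀ Y e, 0 ≤ pk Y e)
    (init : (Fin R → Fin d) → ℝ) (h0 : ∀ Z, 0 ≤ init Z) (x : ℕ → Fin d) :
    0 ≤ wt R T r pk init x :=
  mul_nonneg (h0 _) (Finset.prod_nonneg fun _ _ => hpk0 _ _)

lemma EE_mono {d n : ℕ} (hd : 0 < d) (R : ℕ) (r : Fin n → ℕ)
    (pk : (Fin n → Fin d) → Fin d → ℝ) (hpk0 : ∀ Y e, 0 ≤ pk Y e)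
    (init : (Fin R → Fin d) → ℝ) (h0 : ∀ Z, 0 ≤ init Z) (T : ℕ)
    (F G : (ℕ → Fin d) → ℝ) (h : ∀ x, F x ≤ G x) :
    EE hd R r pk init T F ≤ EE hd R r pk init T G :=
  Finset.sum_le_sum fun x _ =>
    mul_le_mul_of_nonneg_left (h _) (wt_nonneg R T r pk hpk0 init h0 _)

lemma EE_one {d n : ℕ} (hd : 0 < d) (R T : ℕ) (r : Fin n → ℕ) (hr : ∀ k, 0 < r k)
    (pk : (Fin n → Fin d) → Fin d → ℝ) (hpk1 : ∀ Y, ∑ e, pk Y e = 1)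
    (init : (Fin R → Fin d) → ℝ) (h1 : ∑ Z, init Z = 1)
    (hRT : R ≤ T) (hR : 0 < R) : EE hd R r pk init T (fun _ => 1) = 1 := by
  rw [EE_le_indep hd R R T r hr pk hpk1 init le_rfl hR hRT _ (fun _ _ _ _ => rfl)]
  have := WW_sum hd R R r pk init (fun _ => 1) (fun _ => 1)
  simp only [WW_init, one_mul, h1] at this
  exact this.symm

lemma EE_sqrt {d n : ℕ} (hd : 0 < d) (R : ℕ) (r : Fin n → ℕ)
    (pk : (Fin n → Fin d) → Fin d → ℝ) (hpk0 : ∀ Y e, 0 ≤ pk Y e)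
    (init : (Fin R → Fin d) → ℝ) (h0 : ∀ Z, 0 ≤ init Z) (T : ℕ)
    (h1 : EE hd R r pk init T (fun _ => 1) = 1)
    (F : (ℕ → Fin d) → ℝ) (hF : ∀ x, 0 ≤ F x) :
    EE hd R r pk init T (fun x => Real.sqrt (F x)) ≤ Real.sqrt (EE hd R r pk init T F) := by
  unfold EE at *
  have h := Real.sum_sqrt_mul_sqrt_le (Finset.univ : Finset (Fin T → Fin d))
    (f := fun x => wt R T r pk init (extd hd x))
    (g := fun x => wt R T r pk init (extd hd x) * F (extd hd x))
    (fun x => wt_nonneg R T r pk hpk0 init h0 _)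
    (fun x => mul_nonneg (wt_nonneg R T r pk hpk0 init h0 _) (hF _))
  simp only [mul_one] at h1
  rw [h1, Real.sqrt_one, one_mul] at h
  refine le_trans (le_of_eq (Finset.sum_congr rfl fun x _ => ?_)) h
  have hw := wt_nonneg R T r pk hpk0 init h0 (extd hd x)
  rw [Real.sqrt_mul hw, ← mul_assoc, Real.mul_self_sqrt hw]

lemma g_sq {d : ℕ} (q : Fin d → ℝ) (hq0 : ∀ k, 0 ≤ q k) (hq1 : ∑ k, q k = 1) (e : Fin d) :
    ∑ k, ((if e = k then (1:ℝ) else 0) - q k) ^ 2 ≤ 2 := by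
  have hle : ∀ k, q k ≤ 1 := fun k => by
    rw [← hq1]; exact Finset.single_le_sum (fun i _ => hq0 i) (Finset.mem_univ k)
  calc _ ≤ ∑ k, ((if e = k then (1:ℝ) else 0) + q k) := by
        refine Finset.sum_le_sum fun k _ => ?_
        have := hle k
        have := hq0 k
        split_ifs <;> nlinarith
    _ = 2 := by rw [Finset.sum_add_distrib, hq1]; simp; norm_num

lemma WW_one_nrm {d n R : ℕ} (hd : 0 < d) (hR : 0 < R) (r : Fin n → ℕ) (hrpos : ∀ i, 0 < r i)
    (hrR : ∀ i, r i ≤ R)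
    (pk : (Fin n → Fin d) → Fin d → ℝ) (hpk1 : ∀ Y, ∑ e, pk Y e = 1)
    (μ0 : (Fin R → Fin d) → ℝ) (hμ01 : ∑ Z, μ0 Z = 1)
    (μ : (Fin R → Fin d) → ℝ) (hμpos : ∀ Z, 0 < μ Z) (hμ1 : ∑ Z, μ Z = 1)
    (hstat : ∀ Z', μ Z' = ∑ Z, windowMatrix d n R hR r hrpos pk Z' Z * μ Z)
    (lam : ℝ) (hlam0 : 0 ≤ lam) (hlam1 : lam < 1)
    (hop : ∀ v : (Fin R → Fin d) → ℝ,
      Real.sqrt (∑ Z', Matrix.mulVec (specA d n R hR r hrpos pk μ) v Z' ^ 2)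
        ≤ lam * Real.sqrt (∑ Z, v Z ^ 2)) (T : ℕ) (hT : R ≤ T) :
    ∑ Z, WW hd R r pk μ0 T (fun _ => 1) Z ^ 2 / μ Z ≤ chiSq μ0 μ + 1 := by
  obtain ⟨t, rfl⟩ := Nat.exists_eq_add_of_le hT
  have hs : ∀ t, ∑ Z, WW hd R r pk μ0 (R + t) (fun _ => 1) Z = 1 := by
    intro t
    have := WW_sum hd R (R + t) r pk μ0 (fun _ => 1) (fun _ => 1)
    simp only [one_mul] at this
    rw [this, EE_one hd R (R + t) r hrpos pk hpk1 μ0 hμ01 (by omega) hR]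
  have h := iter_contr hR r hrpos pk μ hμpos hμ1 hstat lam hlam0 hop
    (fun t => WW hd R r pk μ0 (R + t) (fun _ => 1)) 1 hs
    (fun t Z' => WW_succ hd R (R + t) r hrpos hrR pk μ0 (by omega) hR _ (fun _ _ => rfl) Z') t
  rw [nrm_center μ hμpos hμ1 _ 1 (hs t)] at h
  simp only [add_zero, WW_init, one_mul] at h
  have h2 : 0 ≤ ∑ Z, (μ0 Z - μ Z) ^ 2 / μ Z :=
    Finset.sum_nonneg fun Z _ => div_nonneg (sq_nonneg _) (hμpos Z).le
  have h3 : (lam ^ t) ^ 2 ≤ 1 :=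
    pow_le_one₀ (by positivity) (pow_le_one₀ hlam0 hlam1.le)
  unfold chiSq
  nlinarith

lemma corr_one {d n R : ℕ} (hd : 0 < d) (hR : 0 < R) (r : Fin n → ℕ) (hrpos : ∀ i, 0 < r i)
    (hrR : ∀ i, r i ≤ R)
    (pk : (Fin n → Fin d) → Fin d → ℝ) (hpk1 : ∀ Y, ∑ e, pk Y e = 1)
    (μ0 : (Fin R → Fin d) → ℝ)
    (μ : (Fin R → Fin d) → ℝ) (hμpos : ∀ Z, 0 < μ Z) (hμ1 : ∑ Z, μ Z = 1)
    (hstat : ∀ Z', μ Z' = ∑ Z, windowMatrix d n R hR r hrpos pk Z' Z * μ Z)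
    (lam : ℝ) (hlam0 : 0 ≤ lam)
    (hop : ∀ v : (Fin R → Fin d) → ℝ,
      Real.sqrt (∑ Z', Matrix.mulVec (specA d n R hR r hrpos pk μ) v Z' ^ 2)
        ≤ lam * Real.sqrt (∑ Z, v Z ^ 2))
    (g : Fin d → ℝ)
    (hg : ∑ Z, g (Z ⟨R - 1, Nat.sub_lt hR Nat.one_pos⟩) * μ Z = 0)
    (l j : ℕ) (hl : R ≤ l) :
    EE hd R r pk μ0 (l + j + 1) (fun x => g (x l) * g (x (l + j)))
      ≤ lam ^ j * (Real.sqrt (∑ Z, g (Z ⟨R - 1, Nat.sub_lt hR Nat.one_pos⟩) ^ 2 * μ Z) *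
        Real.sqrt (∑ Z, (g (Z ⟨R - 1, Nat.sub_lt hR Nat.one_pos⟩) *
          WW hd R r pk μ0 (l + 1) (fun _ => 1) Z) ^ 2 / μ Z)) := by
  set lst : (Fin R → Fin d) → Fin d := fun Z => Z ⟨R - 1, Nat.sub_lt hR Nat.one_pos⟩ with hlst
  change ∑ Z, g (lst Z) * μ Z = 0 at hg
  change _ ≤ lam ^ j * (Real.sqrt (∑ Z, g (lst Z) ^ 2 * μ Z) *
        Real.sqrt (∑ Z, (g (lst Z) * WW hd R r pk μ0 (l + 1) (fun _ => 1) Z) ^ 2 / μ Z))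
  set F : (ℕ → Fin d) → ℝ := fun x => g (x l) with hF
  have hFi : ∀ x e t, l + 1 ≤ t → F (Function.update x t e) = F x := by
    intro x e t ht
    simp only [hF]
    rw [Function.update_of_ne (by omega)]
  set w : ℕ → (Fin R → Fin d) → ℝ := fun t => WW hd R r pk μ0 (l + 1 + t) F with hw
  set s : ℝ := EE hd R r pk μ0 (l + 1) F with hs
  have hws : ∀ t, ∑ Z, w t Z = s := by
    intro t
    have := WW_sum hd R (l + 1 + t) r pk μ0 F (fun _ => 1)
    simp only [one_mul, mul_one] at this
    rw [hw]
    simp only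
    rw [this]
    exact EE_le_indep hd R (l + 1) _ r hrpos pk hpk1 μ0 (by omega) hR (by omega) F hFi
  have h := iter_contr hR r hrpos pk μ hμpos hμ1 hstat lam hlam0 hop w s hws
    (fun t Z' => WW_succ hd R (l + 1 + t) r hrpos hrR pk μ0 (by omega) hR F
      (fun x e => hFi x e _ (by omega)) Z') j
  have h0 : ∑ Z, (w 0 Z - s * μ Z) ^ 2 / μ Z
      ≤ ∑ Z, (g (lst Z) * WW hd R r pk μ0 (l + 1) (fun _ => 1) Z) ^ 2 / μ Z := by
    rw [nrm_center μ hμpos hμ1 _ s (hws 0)]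
    have : ∀ Z, w 0 Z = g (lst Z) * WW hd R r pk μ0 (l + 1) (fun _ => 1) Z := fun Z =>
      WW_last hd R l r pk μ0 hR hl g Z
    simp only [this]
    nlinarith [sq_nonneg s]
  have e1 : EE hd R r pk μ0 (l + j + 1) (fun x => g (x l) * g (x (l + j)))
      = ∑ Z, (g (lst Z) * Real.sqrt (μ Z)) * ((w j Z - s * μ Z) / Real.sqrt (μ Z)) := by
    have a1 := WW_sum hd R (l + 1 + j) r pk μ0 F (fun Z => g (lst Z))
    have a2 : ∀ Z, (g (lst Z) * Real.sqrt (μ Z)) * ((w j Z - s * μ Z) / Real.sqrt (μ Z))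
        = g (lst Z) * w j Z - s * (g (lst Z) * μ Z) := by
      intro Z
      have := (Real.sqrt_pos.2 (hμpos Z)).ne'
      field_simp
    simp only [a2, Finset.sum_sub_distrib, ← Finset.mul_sum, hg, mul_zero, sub_zero]
    rw [hw]; simp only
    rw [a1]
    have : l + j + 1 = l + 1 + j := by omega
    rw [this]
    congr 1; funext x
    simp only [hF, hlst]
    rw [show l + 1 + j - R + (R - 1) = l + j by omega]
  rw [e1]
  refine le_trans (Real.sum_mul_le_sqrt_mul_sqrt _ _ _) ?_
  have b1 : ∀ Z, (g (lst Z) * Real.sqrt (μ Z)) ^ 2 = g (lst Z) ^ 2 * μ Z := fun Z => by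
    rw [mul_pow, Real.sq_sqrt (hμpos Z).le]
  have b2 : ∀ Z, ((w j Z - s * μ Z) / Real.sqrt (μ Z)) ^ 2 = (w j Z - s * μ Z) ^ 2 / μ Z :=
    fun Z => by rw [div_pow, Real.sq_sqrt (hμpos Z).le]
  simp only [b1, b2]
  have b3 : Real.sqrt (∑ Z, (w j Z - s * μ Z) ^ 2 / μ Z) ≤ lam ^ j *
      Real.sqrt (∑ Z, (g (lst Z) * WW hd R r pk μ0 (l + 1) (fun _ => 1) Z) ^ 2 / μ Z) := by
    have hj : 0 ≤ lam ^ j := by positivity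
    rw [← Real.sqrt_sq hj, ← Real.sqrt_mul (sq_nonneg _)]
    exact Real.sqrt_le_sqrt (h.trans (mul_le_mul_of_nonneg_left h0 (sq_nonneg _)))
  calc _ ≤ _ := mul_le_mul_of_nonneg_left b3 (Real.sqrt_nonneg _)
    _ = _ := by ring

lemma corr_sum {d n R : ℕ} (hd : 0 < d) (hR : 0 < R) (r : Fin n → ℕ) (hrpos : ∀ i, 0 < r i)
    (hrR : ∀ i, r i ≤ R)
    (pk : (Fin n → Fin d) → Fin d → ℝ) (hpk1 : ∀ Y, ∑ e, pk Y e = 1)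
    (μ0 : (Fin R → Fin d) → ℝ) (hμ01 : ∑ Z, μ0 Z = 1)
    (μ : (Fin R → Fin d) → ℝ) (hμpos : ∀ Z, 0 < μ Z) (hμ1 : ∑ Z, μ Z = 1)
    (hstat : ∀ Z', μ Z' = ∑ Z, windowMatrix d n R hR r hrpos pk Z' Z * μ Z)
    (lam : ℝ) (hlam0 : 0 ≤ lam) (hlam1 : lam < 1)
    (hop : ∀ v : (Fin R → Fin d) → ℝ,
      Real.sqrt (∑ Z', Matrix.mulVec (specA d n R hR r hrpos pk μ) v Z' ^ 2)
        ≤ lam * Real.sqrt (∑ Z, v Z ^ 2))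
    (q : Fin d → ℝ) (hq0 : ∀ k, 0 ≤ q k) (hq1 : ∑ k, q k = 1)
    (hq : ∀ k, ∑ Z, (if Z ⟨R - 1, Nat.sub_lt hR Nat.one_pos⟩ = k then (1:ℝ) else 0) * μ Z = q k)
    (l j : ℕ) (hl : R ≤ l) :
    ∑ k, EE hd R r pk μ0 (l + j + 1)
        (fun x => ((if x l = k then (1:ℝ) else 0) - q k) *
          ((if x (l + j) = k then (1:ℝ) else 0) - q k))
      ≤ lam ^ j * (2 * Real.sqrt (chiSq μ0 μ + 1)) := by
  have h1 : ∀ k, EE hd R r pk μ0 (l + j + 1)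
        (fun x => ((if x l = k then (1:ℝ) else 0) - q k) *
          ((if x (l + j) = k then (1:ℝ) else 0) - q k)) ≤ _ := fun k =>
    corr_one hd hR r hrpos hrR pk hpk1 μ0 μ hμpos hμ1 hstat lam hlam0 hop
      (fun e => (if e = k then (1:ℝ) else 0) - q k)
      (by simp only [sub_mul, Finset.sum_sub_distrib, hq, ← Finset.mul_sum, hμ1]; ring) l j hl
  refine (Finset.sum_le_sum fun k _ => h1 k).trans ?_
  rw [← Finset.mul_sum]
  refine mul_le_mul_of_nonneg_left ?_ (by positivity)
  refine (Real.sum_sqrt_mul_sqrt_le _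
    (fun k => Finset.sum_nonneg fun Z _ => mul_nonneg (sq_nonneg _) (hμpos Z).le)
    (fun k => Finset.sum_nonneg fun Z _ => div_nonneg (sq_nonneg _) (hμpos Z).le)).trans ?_
  have c1 : ∑ k, ∑ Z, ((if Z ⟨R - 1, Nat.sub_lt hR Nat.one_pos⟩ = k then (1:ℝ) else 0) - q k) ^ 2
      * μ Z ≤ 2 := by
    rw [Finset.sum_comm]
    simp only [← Finset.sum_mul]
    calc _ ≤ ∑ Z, 2 * μ Z := Finset.sum_le_sum fun Z _ =>
          mul_le_mul_of_nonneg_right (g_sq q hq0 hq1 _) (hμpos Z).le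
      _ = 2 := by rw [← Finset.mul_sum, hμ1, mul_one]
  have c2 : ∑ k, ∑ Z, (((if Z ⟨R - 1, Nat.sub_lt hR Nat.one_pos⟩ = k then (1:ℝ) else 0) - q k) *
      WW hd R r pk μ0 (l + 1) (fun _ => 1) Z) ^ 2 / μ Z ≤ 2 * (chiSq μ0 μ + 1) := by
    rw [Finset.sum_comm]
    simp only [mul_pow, mul_div_assoc, ← Finset.sum_mul]
    calc _ ≤ ∑ Z, 2 * (WW hd R r pk μ0 (l + 1) (fun _ => 1) Z ^ 2 / μ Z) :=
          Finset.sum_le_sum fun Z _ =>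
            mul_le_mul_of_nonneg_right (g_sq q hq0 hq1 _) (div_nonneg (sq_nonneg _) (hμpos Z).le)
      _ ≤ _ := by
        rw [← Finset.mul_sum]
        have := WW_one_nrm hd hR r hrpos hrR pk hpk1 μ0 hμ01 μ hμpos hμ1 hstat lam hlam0 hlam1 hop
          (l + 1) (by omega)
        linarith
  calc _ ≤ Real.sqrt 2 * Real.sqrt (2 * (chiSq μ0 μ + 1)) :=
        mul_le_mul (Real.sqrt_le_sqrt c1) (Real.sqrt_le_sqrt c2) (Real.sqrt_nonneg _)
          (Real.sqrt_nonneg _)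
    _ = _ := by
      rw [Real.sqrt_mul (by norm_num), ← mul_assoc, Real.mul_self_sqrt (by norm_num)]

lemma geom_sum_le_inv (lam : ℝ) (h0 : 0 ≤ lam) (h1 : lam < 1) (n : ℕ) :
    ∑ i ∈ Finset.range n, lam ^ i ≤ (1 - lam)⁻¹ := by
  rw [← tsum_geometric_of_lt_one h0 h1]
  exact (summable_geometric_of_lt_one h0 h1).sum_le_tsum _ (fun i _ => by positivity)

lemma row_le (lam : ℝ) (h0 : 0 ≤ lam) (h1 : lam < 1) (M L l : ℕ) (hl : l ∈ Finset.Ico M L) :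
    ∑ m ∈ Finset.Ico M L, lam ^ ((l - m) + (m - l)) ≤ 2 * (1 - lam)⁻¹ := by
  obtain ⟨a, b⟩ := Finset.mem_Ico.mp hl
  rw [← Finset.sum_Ico_consecutive _ a b.le]
  have e1 : ∑ m ∈ Finset.Ico l L, lam ^ ((l - m) + (m - l)) ≤ (1 - lam)⁻¹ := by
    rw [Finset.sum_Ico_eq_sum_range]
    refine le_trans (le_of_eq (Finset.sum_congr rfl fun i _ => ?_)) (geom_sum_le_inv lam h0 h1 (L - l))
    congr 1; omega
  have e2 : ∑ m ∈ Finset.Ico M l, lam ^ ((l - m) + (m - l)) ≤ (1 - lam)⁻¹ := by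
    rw [Finset.sum_Ico_eq_sum_range, ← Finset.sum_range_reflect]
    refine le_trans (Finset.sum_le_sum fun i hi => ?_) (geom_sum_le_inv lam h0 h1 (l - M))
    have := Finset.mem_range.mp hi
    exact pow_le_pow_of_le_one h0 h1.le (by omega)
  linarith

lemma second_moment {d n R : ℕ} (hd : 0 < d) (hR : 0 < R) (r : Fin n → ℕ) (hrpos : ∀ i, 0 < r i)
    (hrR : ∀ i, r i ≤ R)
    (pk : (Fin n → Fin d) → Fin d → ℝ) (hpk1 : ∀ Y, ∑ e, pk Y e = 1)
    (μ0 : (Fin R → Fin d) → ℝ) (hμ01 : ∑ Z, μ0 Z = 1)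
    (μ : (Fin R → Fin d) → ℝ) (hμpos : ∀ Z, 0 < μ Z) (hμ1 : ∑ Z, μ Z = 1)
    (hstat : ∀ Z', μ Z' = ∑ Z, windowMatrix d n R hR r hrpos pk Z' Z * μ Z)
    (lam : ℝ) (hlam0 : 0 ≤ lam) (hlam1 : lam < 1)
    (hop : ∀ v : (Fin R → Fin d) → ℝ,
      Real.sqrt (∑ Z', Matrix.mulVec (specA d n R hR r hrpos pk μ) v Z' ^ 2)
        ≤ lam * Real.sqrt (∑ Z, v Z ^ 2))
    (q : Fin d → ℝ) (hq0 : ∀ k, 0 ≤ q k) (hq1 : ∑ k, q k = 1)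
    (hq : ∀ k, ∑ Z, (if Z ⟨R - 1, Nat.sub_lt hR Nat.one_pos⟩ = k then (1:ℝ) else 0) * μ Z = q k)
    (M L : ℕ) (hRM : R ≤ M) (hML : M ≤ L) :
    EE hd R r pk μ0 (L + 1) (fun x => ∑ k,
        (∑ l ∈ Finset.Ico M L, ((if x l = k then (1:ℝ) else 0) - q k)) ^ 2)
      ≤ ((L:ℝ) - M) * (2 * (1 - lam)⁻¹ * (2 * Real.sqrt (chiSq μ0 μ + 1))) := by
  set D := 2 * Real.sqrt (chiSq μ0 μ + 1) with hD
  have hD0 : 0 ≤ D := by positivity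
  have hc : ∀ l j, R ≤ l → l + j < L →
      ∑ k, EE hd R r pk μ0 (L + 1)
        (fun x => ((if x l = k then (1:ℝ) else 0) - q k) *
          ((if x (l + j) = k then (1:ℝ) else 0) - q k)) ≤ lam ^ j * D := by
    intro l j hl hj
    have := corr_sum hd hR r hrpos hrR pk hpk1 μ0 hμ01 μ hμpos hμ1 hstat lam hlam0 hlam1 hop
      q hq0 hq1 hq l j hl
    refine le_trans (le_of_eq (Finset.sum_congr rfl fun k _ => ?_)) this
    refine EE_le_indep hd R (l + j + 1) (L + 1) r hrpos pk hpk1 μ0 (by omega) hR (by omega) _ ?_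
    intro x e t ht
    rw [Function.update_of_ne (by omega), Function.update_of_ne (by omega)]
  have hc2 : ∀ l ∈ Finset.Ico M L, ∀ m ∈ Finset.Ico M L,
      ∑ k, EE hd R r pk μ0 (L + 1)
        (fun x => ((if x l = k then (1:ℝ) else 0) - q k) *
          ((if x m = k then (1:ℝ) else 0) - q k)) ≤ lam ^ ((l - m) + (m - l)) * D := by
    intro l hl m hm
    have hl := Finset.mem_Ico.mp hl
    have hm := Finset.mem_Ico.mp hm
    rcases le_total l m with h | h
    · obtain ⟨j, rfl⟩ := Nat.exists_eq_add_of_le h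
      have := hc l j (by omega) (by omega)
      rwa [show l - (l + j) + (l + j - l) = j by omega]
    · obtain ⟨j, rfl⟩ := Nat.exists_eq_add_of_le h
      have := hc m j (by omega) (by omega)
      rw [show m + j - m + (m - (m + j)) = j by omega]
      refine le_trans (le_of_eq ?_) this
      refine Finset.sum_congr rfl fun k _ => ?_
      congr 1; funext x; ring
  simp only [sq, Finset.sum_mul_sum]
  simp only [EE_sum]
  rw [Finset.sum_comm]
  calc _ ≤ ∑ l ∈ Finset.Ico M L, ∑ m ∈ Finset.Ico M L, lam ^ ((l - m) + (m - l)) * D := by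
        refine Finset.sum_le_sum fun l hl => ?_
        rw [Finset.sum_comm]
        exact Finset.sum_le_sum fun m hm => hc2 l hl m hm
    _ ≤ ∑ l ∈ Finset.Ico M L, 2 * (1 - lam)⁻¹ * D := by
        refine Finset.sum_le_sum fun l hl => ?_
        rw [← Finset.sum_mul]
        exact mul_le_mul_of_nonneg_right (row_le lam hlam0 hlam1 M L l hl) hD0
    _ = _ := by
        rw [Finset.sum_const, Nat.card_Ico, nsmul_eq_mul, Nat.cast_sub hML]

lemma WW_stat {d n R : ℕ} (hd : 0 < d) (hR : 0 < R) (r : Fin n → ℕ) (hrpos : ∀ i, 0 < r i)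
    (hrR : ∀ i, r i ≤ R) (pk : (Fin n → Fin d) → Fin d → ℝ)
    (μ : (Fin R → Fin d) → ℝ)
    (hstat : ∀ Z', μ Z' = ∑ Z, windowMatrix d n R hR r hrpos pk Z' Z * μ Z)
    (T : ℕ) (hT : R ≤ T) (Z : Fin R → Fin d) : WW hd R r pk μ T (fun _ => 1) Z = μ Z := by
  induction T, hT using Nat.le_induction generalizing Z with
  | base => exact WW_init hd R r pk μ Z
  | succ t ht ih =>
    rw [WW_succ hd R t r hrpos hrR pk μ ht hR _ (fun _ _ => rfl), hstat Z]
    simp only [ih]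

lemma tokenMarg_eq {d n R M : ℕ} (hd : 0 < d) (r : Fin n → ℕ)
    (pk : (Fin n → Fin d) → Fin d → ℝ) (μ : (Fin R → Fin d) → ℝ) (h : R ≤ M + 1) (k : Fin d) :
    tokenMarg d M (ngramProb d n R (M + 1) r pk μ h) k
      = EE hd R r pk μ (M + 1) (fun x => if x M = k then (1:ℝ) else 0) := by
  unfold tokenMarg EE
  refine Finset.sum_congr rfl fun x _ => ?_
  beta_reduce
  rw [ngramProb_eq_wt hd, extd_lt hd x M (Nat.lt_succ_self M)]
  simp

/-- Deterministic part: the `A`-integrand vanishes. -/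
lemma A_zero {d : ℕ} {ι : Type*} (s : Finset ι) (a : Fin d) (b : ι → Fin d) (ε c N : ℝ)
    (hN : N = s.card) (hN0 : 0 < N) :
    ∑ l ∈ s, (∑ k : Fin d, ((if a = k ∧ b l = k then (1:ℝ) else 0) /
        ((∑ l ∈ s, (if b l = k then (1:ℝ) else 0)) / N + ε) -
        (∑ l ∈ s, (if b l = k then (1:ℝ) else 0)) / N * (if a = k then (1:ℝ) else 0) /
        ((∑ l ∈ s, (if b l = k then (1:ℝ) else 0)) / N + ε))) * c = 0 := by
  rw [← Finset.sum_mul, Finset.sum_comm]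
  refine mul_eq_zero_of_left (Finset.sum_eq_zero fun k _ => ?_) c
  rw [Finset.sum_sub_distrib, Finset.sum_const, nsmul_eq_mul, ← hN, ← Finset.sum_div]
  by_cases h : a = k
  · simp only [h, true_and, if_true]
    field_simp
    ring
  · simp [h]

lemma B_eq {d : ℕ} {ι : Type*} (s : Finset ι) (a : Fin d) (b : ι → Fin d) (q : Fin d → ℝ) (c N : ℝ)
    (hN : N = s.card) (hN0 : 0 < N) (hq : ∀ k, 0 < q k) :
    (∑ l ∈ s, ((∑ k : Fin d, (if a = k ∧ b l = k then (1:ℝ) else 0) / q k) - 1) * c) / N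
      = (∑ l ∈ s, ((if b l = a then (1:ℝ) else 0) - q a)) / N / q a * c := by
  have : ∀ l, (∑ k : Fin d, (if a = k ∧ b l = k then (1:ℝ) else 0) / q k)
      = (if b l = a then (1:ℝ) else 0) / q a := by
    intro l
    rw [Finset.sum_eq_single a]
    · simp
    · intro k _ hk; simp [hk.symm]
    · simp
  simp only [this]
  rw [← Finset.sum_mul, Finset.sum_sub_distrib, Finset.sum_sub_distrib, ← Finset.sum_div]
  simp only [Finset.sum_const, nsmul_eq_mul, ← hN]
  have := (hq a).ne'
  field_simp

/-- Replacing the empirical token frequency `ȳ` (plus the smoothing `ε`) by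
the stationary single-token marginal `q` incurs an error of at most
`4C((1−λ)^{-1/2}(D₀+1)^{1/4} + 2√M)/(√L·γ) + Cγ⁻¹ε` in the gradient-type expectation. -/
theorem statement12
    (d n R M L : ℕ) (hd : 0 < d) (hn : 0 < n) (hR : 0 < R)
    (r : Fin n → ℕ) (hrpos : ∀ i, 0 < r i) (hrmono : StrictMono r)
    (hrR : ∀ i, r i ≤ R) (hRmax : ∃ i, r i = R)
    (pk : (Fin n → Fin d) → Fin d → ℝ)
    (hpk0 : ∀ Y e, 0 ≤ pk Y e) (hpk1 : ∀ Y, ∑ e, pk Y e = 1)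
    (μ0 : (Fin R → Fin d) → ℝ) (hμ00 : ∀ Z, 0 ≤ μ0 Z) (hμ01 : ∑ Z, μ0 Z = 1)
    (μ : (Fin R → Fin d) → ℝ) (hμpos : ∀ Z, 0 < μ Z) (hμ1 : ∑ Z, μ Z = 1)
    (hstat : ∀ Z', μ Z' = ∑ Z, windowMatrix d n R hR r hrpos pk Z' Z * μ Z)
    (lam : ℝ) (hlam0 : 0 ≤ lam) (hlam1 : lam < 1)
    (hop : ∀ v : (Fin R → Fin d) → ℝ,
      Real.sqrt (∑ Z', Matrix.mulVec (specA d n R hR r hrpos pk μ) v Z' ^ 2)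
        ≤ lam * Real.sqrt (∑ Z, v Z ^ 2))
    (γ : ℝ) (hγ : 0 < γ) (hpkγ : ∀ Y e, γ ≤ pk Y e)
    (hRM : R ≤ M) (hML : 2 * M ≤ L) (hML1 : M + 1 ≤ L)
    (ε C : ℝ) (hε : 0 < ε) (hC : 0 < C)
    (f : (Fin (L + 1) → Fin d) → ℝ) (hf : ∀ x, |f x| ≤ C) :
    let p := ngramProb d n R (L + 1) r pk μ0 (by omega);
    let q : Fin d → ℝ := tokenMarg d M (ngramProb d n R (M + 1) r pk μ (by omega));
    let ybar : (Fin (L + 1) → Fin d) → Fin d → ℝ := fun x k =>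
      (∑ l ∈ (Finset.Ico M L).attach, (if x ⟨l.1, icoLtSucc l⟩ = k then (1 : ℝ) else 0)) /
        ((L : ℝ) - M);
    let A := ∑ x : Fin (L + 1) → Fin d, p x *
      ((∑ l ∈ (Finset.Ico M L).attach,
          (∑ k : Fin d,
            ((if x ⟨L, Nat.lt_succ_self L⟩ = k ∧ x ⟨l.1, icoLtSucc l⟩ = k then (1 : ℝ) else 0) /
                (ybar x k + ε) -
              ybar x k * (if x ⟨L, Nat.lt_succ_self L⟩ = k then (1 : ℝ) else 0) /
                (ybar x k + ε))) * f x) /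
        ((L : ℝ) - M));
    let B := ∑ x : Fin (L + 1) → Fin d, p x *
      ((∑ l ∈ (Finset.Ico M L).attach,
          ((∑ k : Fin d,
            (if x ⟨L, Nat.lt_succ_self L⟩ = k ∧ x ⟨l.1, icoLtSucc l⟩ = k then (1 : ℝ) else 0) /
              q k) - 1) * f x) /
        ((L : ℝ) - M));
    |A - B| ≤
      4 * C * ((Real.sqrt (1 - lam))⁻¹ * Real.sqrt (Real.sqrt (chiSq μ0 μ + 1)) +
          2 * Real.sqrt M) / (Real.sqrt L * γ) +
        C * γ⁻¹ * ε := by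
  intro p q ybar A B
  have hNc : (L:ℝ) - M = ((Finset.Ico M L).attach.card : ℝ) := by
    rw [Finset.card_attach, Nat.card_Ico, Nat.cast_sub (by omega)]
  have hN0 : 0 < (L:ℝ) - M := by
    have : (M:ℝ) + 1 ≤ L := by exact_mod_cast hML1
    linarith
  have hN2 : (L:ℝ) ≤ 2 * ((L:ℝ) - M) := by
    have : 2 * (M:ℝ) ≤ L := by exact_mod_cast hML
    linarith
  have hL0 : 0 < (L:ℝ) := by
    have : 1 ≤ L := by omega
    exact_mod_cast this
  -- the marginal
  have hqE : ∀ k, q k = EE hd R r pk μ (M + 1) (fun x => if x M = k then (1:ℝ) else 0) :=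
    fun k => tokenMarg_eq hd r pk μ _ k
  have hqμ : ∀ k, ∑ Z, (if Z ⟨R - 1, Nat.sub_lt hR Nat.one_pos⟩ = k then (1:ℝ) else 0) * μ Z
      = q k := by
    intro k
    have h1 := WW_sum hd R (M + 1) r pk μ (fun _ => 1)
      (fun Z => if Z ⟨R - 1, Nat.sub_lt hR Nat.one_pos⟩ = k then (1:ℝ) else 0)
    simp only [WW_stat hd hR r hrpos hrR pk μ hstat (M + 1) (by omega)] at h1
    rw [h1, hqE]
    congr 1; funext x
    simp only [show M + 1 - R + (R - 1) = M by omega, one_mul]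
  have hqγ : ∀ k, γ ≤ q k := by
    intro k
    rw [hqE, EE_succ hd R M r hrpos pk μ hRM hR]
    have h1 := EE_smul hd R r pk μ M γ (fun _ => 1)
    rw [EE_one hd R M r hrpos pk hpk1 μ hμ1 hRM hR, mul_one] at h1
    rw [← h1]
    refine EE_mono hd R r pk hpk0 μ (fun Z => (hμpos Z).le) M _ _ fun x => ?_
    simp only [Function.update_self, mul_ite, mul_one, mul_zero, Finset.sum_ite_eq',
      Finset.mem_univ, if_true]
    exact hpkγ _ _
  have hq0 : ∀ k, 0 < q k := fun k => lt_of_lt_of_le hγ (hqγ k)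
  have hq1 : ∑ k, q k = 1 := by
    simp only [← hqμ]
    rw [Finset.sum_comm]
    simp only [← Finset.sum_mul]
    simp [hμ1]
  have hA : A = 0 := by
    refine Finset.sum_eq_zero fun x _ => ?_
    have := A_zero (Finset.Ico M L).attach (x ⟨L, Nat.lt_succ_self L⟩)
      (fun l => x ⟨l.1, icoLtSucc l⟩) ε (f x) ((L:ℝ) - M) hNc hN0
    simp only [ybar]
    rw [this]
    simp
  set S : (ℕ → Fin d) → ℝ := fun x => ∑ k,
    (∑ l ∈ Finset.Ico M L, ((if x l = k then (1:ℝ) else 0) - q k)) ^ 2 with hS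
  have hS0 : ∀ x, 0 ≤ S x := fun x => Finset.sum_nonneg fun k _ => sq_nonneg _
  have hB : |B| ≤ C * γ⁻¹ * ((L:ℝ) - M)⁻¹ *
      EE hd R r pk μ0 (L + 1) (fun x => Real.sqrt (S x)) := by
    rw [← EE_smul]
    refine (Finset.abs_sum_le_sum_abs _ _).trans ?_
    unfold EE
    refine Finset.sum_le_sum fun x _ => ?_
    have hpw : p x = wt R (L + 1) r pk μ0 (extd hd x) := ngramProb_eq_wt hd r pk μ0 _ x
    rw [hpw, abs_mul, abs_of_nonneg (wt_nonneg R (L + 1) r pk hpk0 μ0 hμ00 _)]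
    refine mul_le_mul_of_nonneg_left ?_ (wt_nonneg R (L + 1) r pk hpk0 μ0 hμ00 _)
    rw [B_eq (Finset.Ico M L).attach (x ⟨L, Nat.lt_succ_self L⟩)
      (fun l => x ⟨l.1, icoLtSucc l⟩) q (f x) ((L:ℝ) - M) hNc hN0 hq0]
    set a := x ⟨L, Nat.lt_succ_self L⟩
    have e1 : (∑ l ∈ (Finset.Ico M L).attach,
        ((if x ⟨l.1, icoLtSucc l⟩ = a then (1:ℝ) else 0) - q a))
        = ∑ l ∈ Finset.Ico M L, ((if extd hd x l = a then (1:ℝ) else 0) - q a) := by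
      rw [← Finset.sum_attach (Finset.Ico M L)]
      refine Finset.sum_congr rfl fun l _ => ?_
      rw [extd_lt hd x l.1 (icoLtSucc l)]
    rw [e1]
    have e2 : |∑ l ∈ Finset.Ico M L, ((if extd hd x l = a then (1:ℝ) else 0) - q a)|
        ≤ Real.sqrt (S (extd hd x)) := by
      apply Real.abs_le_sqrt
      exact Finset.single_le_sum (f := fun k =>
        (∑ l ∈ Finset.Ico M L, ((if extd hd x l = k then (1:ℝ) else 0) - q k)) ^ 2)
        (fun k _ => sq_nonneg _) (Finset.mem_univ a)
    rw [abs_mul, abs_div, abs_div, abs_of_pos hN0, abs_of_pos (hq0 a)]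
    calc _ ≤ Real.sqrt (S (extd hd x)) / ((L:ℝ) - M) / γ * C := by
          gcongr
          · exact hqγ a
          · exact hf x
      _ = _ := by field_simp
  have hE : EE hd R r pk μ0 (L + 1) (fun x => Real.sqrt (S x)) ≤
      Real.sqrt (((L:ℝ) - M) * (2 * (1 - lam)⁻¹ * (2 * Real.sqrt (chiSq μ0 μ + 1)))) := by
    refine (EE_sqrt hd R r pk hpk0 μ0 hμ00 (L + 1)
      (EE_one hd R (L + 1) r hrpos pk hpk1 μ0 hμ01 (by omega) hR) S hS0).trans ?_
    exact Real.sqrt_le_sqrt (second_moment hd hR r hrpos hrR pk hpk1 μ0 hμ01 μ hμpos hμ1 hstat lam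
      hlam0 hlam1 hop q (fun k => (hq0 k).le) hq1 hqμ M L hRM (by omega))
  set N := (L:ℝ) - M with hN
  set D := Real.sqrt (chiSq μ0 μ + 1) with hD
  have hl1 : 0 < 1 - lam := by linarith
  have hD0 : 0 ≤ D := Real.sqrt_nonneg _
  have hfin : N⁻¹ * Real.sqrt (N * (2 * (1 - lam)⁻¹ * (2 * D)))
      ≤ 4 * ((Real.sqrt (1 - lam))⁻¹ * Real.sqrt D) / Real.sqrt L := by
    have t1 : 4 * ((Real.sqrt (1 - lam))⁻¹ * Real.sqrt D) / Real.sqrt L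
        = Real.sqrt (16 * ((1 - lam)⁻¹ * D) / L) := by
      rw [Real.sqrt_div (by positivity), Real.sqrt_mul (by norm_num),
        Real.sqrt_mul (by positivity), Real.sqrt_inv]
      rw [show (16:ℝ) = 4 ^ 2 by norm_num, Real.sqrt_sq (by norm_num)]
    have t2 : N⁻¹ * Real.sqrt (N * (2 * (1 - lam)⁻¹ * (2 * D)))
        = Real.sqrt (4 * ((1 - lam)⁻¹ * D) / N) := by
      rw [show N⁻¹ = Real.sqrt ((N⁻¹) ^ 2) from (Real.sqrt_sq (by positivity)).symm,
        ← Real.sqrt_mul (by positivity)]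
      congr 1
      field_simp
      ring
    rw [t1, t2]
    apply Real.sqrt_le_sqrt
    have hx : 0 ≤ (1 - lam)⁻¹ * D := by positivity
    rw [div_le_div_iff₀ hN0 hL0]
    nlinarith
  rw [hA, zero_sub, abs_neg]
  calc |B| ≤ C * γ⁻¹ * N⁻¹ * Real.sqrt (N * (2 * (1 - lam)⁻¹ * (2 * D))) :=
        hB.trans (mul_le_mul_of_nonneg_left hE (by positivity))
    _ = C * γ⁻¹ * (N⁻¹ * Real.sqrt (N * (2 * (1 - lam)⁻¹ * (2 * D)))) := by ring
    _ ≤ C * γ⁻¹ * (4 * ((Real.sqrt (1 - lam))⁻¹ * Real.sqrt D) / Real.sqrt L) :=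
        mul_le_mul_of_nonneg_left hfin (by positivity)
    _ = 4 * C * ((Real.sqrt (1 - lam))⁻¹ * Real.sqrt D) / (Real.sqrt L * γ) := by
        have := (Real.sqrt_pos.2 hL0).ne'
        field_simp
    _ ≤ 4 * C * ((Real.sqrt (1 - lam))⁻¹ * Real.sqrt D + 2 * Real.sqrt M) /
          (Real.sqrt L * γ) := by
        gcongr
        have := Real.sqrt_nonneg (M:ℝ)
        linarith
    _ ≤ _ := le_add_of_nonneg_right (by positivity)
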